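/- The checkers relational semantics validates no form of η: for all players p, q ∈ {◦, •}, (1) ⟦λ_p y. x @_q y⟧⊛ is not included in ⟦x⟧⊛ (no η-reduction), and (2) ⟦x⟧⊛ is not included in ⟦λ_p y. x @_q y⟧⊛ (no η-expansion). -/

import Mathlib

set_option autoImplicit false

/-! ### Players -/

inductive Player : Type
  | white
  | black
deriving DecidableEq

/-- The opposite player. -/
def Player.op : Player → Player
  | .white => .black
  | .black => .white

/-- `gamma p q` is `0` if the players agree (silent) and `1` otherwise (interaction). -/
def Player.gamma (p q : Player) : ℕ := if p = q then 0 else 1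

/-! ### Ordinary λ-terms (de Bruijn representation) -/

inductive Lam : Type
  | var : ℕ → Lam
  | lam : Lam → Lam
  | app : Lam → Lam → Lam
deriving DecidableEq

namespace Lam

/-- Shift the free de Bruijn indices ≥ `d` by one. -/
def liftAt : Lam → ℕ → Lam
  | .var n, d => .var (if n < d then n else n + 1)
  | .lam t, d => .lam (t.liftAt (d + 1))
  | .app t u, d => .app (t.liftAt d) (u.liftAt d)

/-- Capture-avoiding substitution of `u` for the de Bruijn index `x`. -/
def subst : Lam → ℕ → Lam → Lam
  | .var n, x, u => if n = x then u else if x < n then .var (n - 1) else .var n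
  | .lam t, x, u => .lam (t.subst (x + 1) (u.liftAt 0))
  | .app t s, x, u => .app (t.subst x u) (s.subst x u)

end Lam

/-- Root β-rule: `(λx.t) u ↦ t[x:=u]`. -/
inductive LBetaRoot : Lam → Lam → Prop
  | beta (t u : Lam) : LBetaRoot (.app (.lam t) u) (t.subst 0 u)

/-- Root η-rule: `λx. t x ↦ t` with `x ∉ FV(t)` (enforced by the lifting). -/
inductive LEtaRoot : Lam → Lam → Prop
  | eta (t : Lam) : LEtaRoot (.lam (.app (t.liftAt 0) (.var 0))) t

/-- Closure of a root relation under all contexts. -/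
inductive LFull (R : Lam → Lam → Prop) : Lam → Lam → Prop
  | root {t u : Lam} : R t u → LFull R t u
  | lam {t u : Lam} : LFull R t u → LFull R (.lam t) (.lam u)
  | appL {t t' : Lam} (u : Lam) : LFull R t t' → LFull R (.app t u) (.app t' u)
  | appR (t : Lam) {u u' : Lam} : LFull R u u' → LFull R (.app t u) (.app t u')

/-- Closure under applicative spine contexts `⟨·⟩ t1 … tk`. -/
inductive LSpine (R : Lam → Lam → Prop) : Lam → Lam → Prop
  | root {t u : Lam} : R t u → LSpine R t u
  | appL {t t' : Lam} (u : Lam) : LSpine R t t' → LSpine R (.app t u) (.app t' u)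

/-- Closure under head contexts `λx1…xn.⟨·⟩ t1 … tk`. -/
inductive LHead (R : Lam → Lam → Prop) : Lam → Lam → Prop
  | spine {t u : Lam} : LSpine R t u → LHead R t u
  | lam {t u : Lam} : LHead R t u → LHead R (.lam t) (.lam u)

/-- β-reduction. -/
def LBeta : Lam → Lam → Prop := LFull LBetaRoot
/-- η-reduction. -/
def LEta : Lam → Lam → Prop := LFull LEtaRoot
/-- Head reduction. -/
def LHStep : Lam → Lam → Prop := LHead LBetaRoot
/-- Multistep head reduction. -/
def LHSteps : Lam → Lam → Prop := Relation.ReflTransGen LHStep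

/-- β-conversion (reflexive-symmetric-transitive closure of β-reduction). -/
def LBetaConv : Lam → Lam → Prop :=
  Relation.ReflTransGen (fun a b => LBeta a b ∨ LBeta b a)
/-- η-conversion. -/
def LEtaConv : Lam → Lam → Prop :=
  Relation.ReflTransGen (fun a b => LEta a b ∨ LEta b a)

/-- Head normal forms: no head step out of `t`. -/
def Lam.LHNF (t : Lam) : Prop := ∀ u, ¬ LHStep t u

/-- Head convergence: `t ⇓h`. -/
def Lam.HConv (t : Lam) : Prop := ∃ h, LHSteps t h ∧ h.LHNF

/-- Ordinary contexts (one hole). -/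
inductive LCtx : Type
  | hole : LCtx
  | lam : LCtx → LCtx
  | appL : LCtx → Lam → LCtx
  | appR : Lam → LCtx → LCtx

/-- Plugging (allowing variable capture). -/
def LCtx.fill : LCtx → Lam → Lam
  | .hole, t => t
  | .lam C, t => .lam (C.fill t)
  | .appL C u, t => .app (C.fill t) u
  | .appR s C, t => .app s (C.fill t)

/-- Head contextual preorder on λ-terms. -/
def CtxLe (t u : Lam) : Prop := ∀ C : LCtx, (C.fill t).HConv → (C.fill u).HConv

/-! ### Checkers terms -/

inductive CTerm : Type
  | var : ℕ → CTerm
  | lam : Player → CTerm → CTerm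
  | app : Player → CTerm → CTerm → CTerm
deriving DecidableEq

namespace CTerm

/-- Shift the free de Bruijn indices ≥ `d` by one. -/
def liftAt : CTerm → ℕ → CTerm
  | .var n, d => .var (if n < d then n else n + 1)
  | .lam p t, d => .lam p (t.liftAt (d + 1))
  | .app p t u, d => .app p (t.liftAt d) (u.liftAt d)

/-- Capture-avoiding substitution of `u` for the de Bruijn index `x`. -/
def subst : CTerm → ℕ → CTerm → CTerm
  | .var n, x, u => if n = x then u else if x < n then .var (n - 1) else .var n
  | .lam p t, x, u => .lam p (t.subst (x + 1) (u.liftAt 0))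
  | .app p t s, x, u => .app p (t.subst x u) (s.subst x u)

/-- The underlying ordinary λ-term of a checkers term. -/
def untag : CTerm → Lam
  | .var n => .var n
  | .lam _ t => .lam t.untag
  | .app _ t u => .app t.untag u.untag

end CTerm

/-- Player lifting: tag every abstraction and application with player `p`. -/
def Lam.tag : Lam → Player → CTerm
  | .var n, _ => .var n
  | .lam t, p => .lam p (t.tag p)
  | .app t u, p => .app p (t.tag p) (u.tag p)

/-- Silent β root rule: the abstraction and the application carry the same player. -/
inductive SilentRoot : CTerm → CTerm → Prop
  | beta (p : Player) (t u : CTerm) : SilentRoot (.app p (.lam p t) u) (t.subst 0 u)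

/-- Interaction β root rule: the application carries the opposite player of the abstraction. -/
inductive InterRoot : CTerm → CTerm → Prop
  | beta (p : Player) (t u : CTerm) : InterRoot (.app p.op (.lam p t) u) (t.subst 0 u)

/-- Closure of a root relation under all checkers contexts. -/
inductive CFull (R : CTerm → CTerm → Prop) : CTerm → CTerm → Prop
  | root {t u : CTerm} : R t u → CFull R t u
  | lam (p : Player) {t u : CTerm} : CFull R t u → CFull R (.lam p t) (.lam p u)
  | appL (p : Player) {t t' : CTerm} (u : CTerm) : CFull R t t' → CFull R (.app p t u) (.app p t' u)
  | appR (p : Player) (t : CTerm) {u u' : CTerm} : CFull R u u' → CFull R (.app p t u) (.app p t u')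

/-- Closure under applicative spine contexts `⟨·⟩ @_{q1} t1 … @_{qk} tk`. -/
inductive CSpine (R : CTerm → CTerm → Prop) : CTerm → CTerm → Prop
  | root {t u : CTerm} : R t u → CSpine R t u
  | appL (p : Player) {t t' : CTerm} (u : CTerm) : CSpine R t t' → CSpine R (.app p t u) (.app p t' u)

/-- Closure under checkers head contexts `λ_{p1}x1…λ_{pn}xn.⟨·⟩ @_{q1} t1 … @_{qk} tk`. -/
inductive CHead (R : CTerm → CTerm → Prop) : CTerm → CTerm → Prop
  | spine {t u : CTerm} : CSpine R t u → CHead R t u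
  | lam (p : Player) {t u : CTerm} : CHead R t u → CHead R (.lam p t) (.lam p u)

/-- Silent β-reduction `→τ`. -/
def StepTau : CTerm → CTerm → Prop := CFull SilentRoot
/-- Interaction β-reduction `→⊛`. -/
def StepInt : CTerm → CTerm → Prop := CFull InterRoot
/-- Checkers β-reduction `→βch`. -/
def StepBch (t u : CTerm) : Prop := StepTau t u ∨ StepInt t u

/-- Silent head reduction `→hτ`. -/
def HStepTau : CTerm → CTerm → Prop := CHead SilentRoot
/-- Interaction head reduction `→h⊛`. -/
def HStepInt : CTerm → CTerm → Prop := CHead InterRoot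
/-- Checkers head reduction `→hch`. -/
def HStepCh (t u : CTerm) : Prop := HStepTau t u ∨ HStepInt t u

/-- Checkers head normal form. -/
def CTerm.HNF (t : CTerm) : Prop := ∀ u, ¬ HStepCh t u

/-- `BigStep t k` means `t ⇓^k`: the (deterministic) checkers head evaluation of `t`
terminates and performs exactly `k` interaction steps. -/
inductive BigStep : CTerm → ℕ → Prop
  | nf {t : CTerm} : t.HNF → BigStep t 0
  | silent {t u : CTerm} {k : ℕ} : HStepTau t u → BigStep u k → BigStep t k
  | inter {t u : CTerm} {k : ℕ} : HStepInt t u → BigStep u k → BigStep t (k + 1)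

/-- `HRed t n i u`: a checkers head reduction sequence from `t` to `u` of length `n`
containing exactly `i` interaction steps. -/
inductive HRed : CTerm → ℕ → ℕ → CTerm → Prop
  | refl (t : CTerm) : HRed t 0 0 t
  | silent {t u s : CTerm} {n i : ℕ} : HStepTau t u → HRed u n i s → HRed t (n + 1) i s
  | inter {t u s : CTerm} {n i : ℕ} : HStepInt t u → HRed u n i s → HRed t (n + 1) (i + 1) s

/-- Checkers contexts (one hole). -/
inductive CCtx : Type
  | hole : CCtx
  | lam : Player → CCtx → CCtx
  | appL : Player → CCtx → CTerm → CCtx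
  | appR : Player → CTerm → CCtx → CCtx

/-- Plugging (allowing variable capture). -/
def CCtx.fill : CCtx → CTerm → CTerm
  | .hole, t => t
  | .lam p C, t => .lam p (C.fill t)
  | .appL p C u, t => .app p (C.fill t) u
  | .appR p s C, t => .app p s (C.fill t)

/-- Player lifting of ordinary contexts. -/
def LCtx.tag : LCtx → Player → CCtx
  | .hole, _ => .hole
  | .lam C, p => .lam p (C.tag p)
  | .appL C u, p => .appL p (C.tag p) (u.tag p)
  | .appR s C, p => .appR p (s.tag p) (C.tag p)

/-- Checkers interaction preorder `≼ctx⊛` on checkers terms. -/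
def IntCtxLe (t u : CTerm) : Prop :=
  ∀ (C : CCtx) (k : ℕ), BigStep (C.fill t) k → BigStep (C.fill u) k

/-- Checkers interaction improvement `≼imp⊛` on checkers terms. -/
def ImpCtxLe (t u : CTerm) : Prop :=
  ∀ (C : CCtx) (k : ℕ), BigStep (C.fill t) k → ∃ k', k' ≤ k ∧ BigStep (C.fill u) k'

/-- Interaction preorder `⊑int` on ordinary λ-terms, via black lifting. -/
def IntLe (t u : Lam) : Prop := IntCtxLe (t.tag .black) (u.tag .black)

/-- Interaction improvement `⊑int·imp` on ordinary λ-terms, via black lifting. -/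
def ImpLe (t u : Lam) : Prop := ImpCtxLe (t.tag .black) (u.tag .black)

/-- Interaction equivalence `≡int`. -/
def IntEq (t u : Lam) : Prop := IntLe t u ∧ IntLe u t

/-- Silent conversion `=τ`: reflexive-symmetric-transitive closure of `→τ`. -/
def SilentConv : CTerm → CTerm → Prop :=
  Relation.ReflTransGen (fun a b => StepTau a b ∨ StepTau b a)


/-! ### Checkers multi types -/

/-- Linear types: an atom `X` and arrows `M →_{p,q} L`, where a multi type `M`
is a finite multiset of linear types (syntactically represented as a list). -/
inductive LType : Type
  | atom : LType
  | arrow : List LType → Player → Player → LType → LType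

/-- Type environments: a multi type for every de Bruijn index. -/
abbrev TEnv : Type := ℕ → Multiset LType

/-- The empty type environment. -/
def TEnv.zero : TEnv := fun _ => 0

/-- Pointwise multiset union of type environments. -/
def TEnv.add (Γ Δ : TEnv) : TEnv := fun n => Γ n + Δ n

/-- The environment assigning `[L]` to `x` and `0` elsewhere. -/
def TEnv.single (x : ℕ) (L : LType) : TEnv := fun n => if n = x then {L} else 0

/-- Extend an environment with a multi type for the freshly bound de Bruijn index `0`. -/
def TEnv.cons (M : Multiset LType) (Γ : TEnv) : TEnv := fun n =>
  match n with
  | 0 => M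
  | n + 1 => Γ n

mutual
  /-- Type derivations `π ▷ Γ ⊢^k t : L` of the checkers multi type system. -/
  inductive Deriv : TEnv → ℕ → CTerm → LType → Type
    | ax (x : ℕ) (L : LType) : Deriv (TEnv.single x L) 0 (.var x) L
    | lam {Γ : TEnv} {k : ℕ} {t : CTerm} {L : LType} (p q : Player) (M : List LType) :
        Deriv (TEnv.cons (Multiset.ofList M) Γ) k t L →
        Deriv Γ k (.lam p t) (.arrow M p q L)
    | app {Γ Δ : TEnv} {k₁ k₂ : ℕ} {t u : CTerm} {M : List LType} {p q : Player} {L : LType} :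
        Deriv Γ k₁ t (.arrow M p q L) → DerivM Δ k₂ u M →
        Deriv (TEnv.add Γ Δ) (k₁ + k₂ + Player.gamma p q) (.app q t u) L
  /-- Derivations `Γ ⊢^k t : M` of a multi type (the `many` rule). -/
  inductive DerivM : TEnv → ℕ → CTerm → List LType → Type
    | nil (t : CTerm) : DerivM TEnv.zero 0 t []
    | cons {Γ Δ : TEnv} {k k' : ℕ} {t : CTerm} {L : LType} {M : List LType} :
        Deriv Γ k t L → DerivM Δ k' t M → DerivM (TEnv.add Γ Δ) (k + k') t (L :: M)
end

mutual
  /-- The (applicative) size `|π|` of a derivation: its number of `@` rules. -/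
  def Deriv.size {Γ : TEnv} {k : ℕ} {t : CTerm} {L : LType} : Deriv Γ k t L → ℕ
    | .ax _ _ => 0
    | .lam _ _ _ π => Deriv.size π
    | .app π μ => Deriv.size π + DerivM.size μ + 1
  /-- Size of a multi-type derivation. -/
  def DerivM.size {Γ : TEnv} {k : ℕ} {t : CTerm} {M : List LType} : DerivM Γ k t M → ℕ
    | .nil _ => 0
    | .cons π μ => Deriv.size π + DerivM.size μ
end

/-- Typability `Γ ⊢^k t : L`. -/
def TJ (Γ : TEnv) (k : ℕ) (t : CTerm) (L : LType) : Prop := Nonempty (Deriv Γ k t L)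

/-- Checkers relational interpretation `⟦t⟧⊛ = {(Γ, k, L) | Γ ⊢^k t : L}`. -/
def CSem (t : CTerm) : Set (TEnv × ℕ × LType) := {x | TJ x.1 x.2.1 t x.2.2}

/-- Black type preorder `⊑•type` on ordinary λ-terms. -/
def BTypeLe (t u : Lam) : Prop := CSem (t.tag .black) ⊆ CSem (u.tag .black)

/-! ### Tight typings -/

/-- All arrows occurring in a linear type are silent (`p = q`). -/
inductive AllSilent : LType → Prop
  | atom : AllSilent .atom
  | arrow {M : List LType} {p : Player} {L : LType} :
      (∀ L' ∈ M, AllSilent L') → AllSilent L → AllSilent (.arrow M p p L)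

/-- The number of nonempty multi types occurring in a linear type. -/
def LType.neCount : LType → ℕ
  | .atom => 0
  | .arrow M _ _ L =>
      min M.length 1 + (M.attach.map fun x => LType.neCount x.1).sum + LType.neCount L
decreasing_by
  · have := List.sizeOf_lt_of_mem x.2
    simp only [LType.arrow.sizeOf_spec]
    omega
  · simp only [LType.arrow.sizeOf_spec]
    omega

/-- The number of nonempty multi types occurring in a multi type (counting itself). -/
def mNeCount (m : Multiset LType) : ℕ :=
  min (Multiset.card m) 1 + (m.map LType.neCount).sum

/-- A typing `(Γ, L)` is tight when all the multi types occurring in `Γ` and `L`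
are empty except for exactly one, and all arrows occurring in `(Γ, L)` are silent. -/
def Tight (Γ : TEnv) (L : LType) : Prop :=
  AllSilent L ∧ (∀ n : ℕ, ∀ L' ∈ Γ n, AllSilent L') ∧
    ∃ S : Finset ℕ, (∀ n : ℕ, n ∉ S → Γ n = 0) ∧
      (∑ n ∈ S, mNeCount (Γ n)) + LType.neCount L = 1

/-- Variables are only typed with index `0`. -/
theorem deriv_var_index {Γ : TEnv} {k x : ℕ} {L : LType} (d : Deriv Γ k (.var x) L) : k = 0 := by
  cases d
  rfl

/-- Abstractions are never typed with the atom. -/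
theorem deriv_lam_atom {Γ : TEnv} {k : ℕ} {p : Player} {t : CTerm}
    (d : Deriv Γ k (.lam p t) .atom) : False := by
  cases d

/-- The checkers relational semantics validates no form of η: neither η-reduction
nor η-expansion, for any combination of players. Here the free variable `x` is the
de Bruijn index `0`, so that its η-expansion `λ_p y. x @_q y` is
`λ_p (var 1 @_q var 0)`. -/
theorem csem_validates_no_eta (p q : Player) :
    ¬ (CSem (.lam p (.app q (.var 1) (.var 0))) ⊆ CSem (.var 0)) ∧
    ¬ (CSem (.var 0) ⊆ CSem (.lam p (.app q (.var 1) (.var 0)))) := by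
  constructor
  · intro h
    have hmem : ((TEnv.single 0 (.arrow [] q.op q .atom), 1, .arrow [] p q .atom) :
        TEnv × ℕ × LType) ∈ CSem (.lam p (.app q (.var 1) (.var 0))) := by
      have d := Deriv.app (Deriv.ax 1 (.arrow [] q.op q .atom)) (DerivM.nil (.var 0))
      have hk : 0 + 0 + Player.gamma q.op q = 1 := by
        cases q <;> rfl
      have hΓ : TEnv.add (TEnv.single 1 (.arrow [] q.op q .atom)) TEnv.zero
          = TEnv.cons (Multiset.ofList []) (TEnv.single 0 (.arrow [] q.op q .atom)) := by
        funext n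
        cases n <;> simp [TEnv.add, TEnv.single, TEnv.zero, TEnv.cons]
      rw [hk, hΓ] at d
      exact ⟨Deriv.lam p q [] d⟩
    obtain ⟨d⟩ := h hmem
    exact absurd (deriv_var_index d) one_ne_zero
  · intro h
    have hmem : ((TEnv.single 0 .atom, 0, .atom) : TEnv × ℕ × LType) ∈ CSem (.var 0) :=
      ⟨Deriv.ax 0 .atom⟩
    obtain ⟨d⟩ := h hmem
    exact deriv_lam_atom d
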